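/- Assume 𝒞 is Fatou closed. Then sNABR holds if and only if for every A ∈ ℱ that is not 𝒫-polar and every n ≥ 1 there exist δ_n with 0 < δ_n ≤ 1/n and Q_n ∈ 𝒫_W such that Q_n(A) > n·δ_n and ∫ X dQ_n < δ_n for every X ∈ 𝒞̃_n. -/

import Mathlib

open MeasureTheory Filter Topology

namespace Paper

variable {Ω : Type*} [MeasurableSpace Ω]

/-- `N` is a `Ps`-polar set: it is contained in a measurable set which is null
for every measure in `Ps`. -/
def Polar (Ps : Set (Measure Ω)) (N : Set Ω) : Prop :=
  ∃ N' : Set Ω, MeasurableSet N' ∧ N ⊆ N' ∧ ∀ P ∈ Ps, P N' = 0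

/-- `X ≤ Y` holds `Ps`-quasi surely. -/
def LeQS (Ps : Set (Measure Ω)) (X Y : Ω → ℝ) : Prop :=
  Polar Ps {ω | ¬ X ω ≤ Y ω}

/-- `X = Y` holds `Ps`-quasi surely. -/
def EqQS (Ps : Set (Measure Ω)) (X Y : Ω → ℝ) : Prop :=
  Polar Ps {ω | X ω ≠ Y ω}

/-- The set of quasi-sure bounds of `X` relative to the weight `W`:
all `m ≥ 0` such that `|X| ≤ m • W` quasi surely. -/
def Bounds (Ps : Set (Measure Ω)) (W X : Ω → ℝ) : Set ℝ :=
  {m | 0 ≤ m ∧ Polar Ps {ω | m * W ω < |X ω|}}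

/-- Membership in the space `L^W`. -/
def MemLW (Ps : Set (Measure Ω)) (W X : Ω → ℝ) : Prop :=
  Measurable X ∧ (Bounds Ps W X).Nonempty

/-- The norm `‖X‖_W` (for `W = 1` this is the quasi-sure sup-norm `‖·‖_{Ps,∞}`). -/
noncomputable def normW (Ps : Set (Measure Ω)) (W X : Ω → ℝ) : ℝ :=
  sInf (Bounds Ps W X)

/-- `Kc` is a convex cone of measurable functions containing `0`. -/
def IsConvexCone (Kc : Set (Ω → ℝ)) : Prop :=
  (∀ k ∈ Kc, Measurable k) ∧ (fun _ => (0 : ℝ)) ∈ Kc ∧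
  (∀ k ∈ Kc, ∀ c : ℝ, 0 ≤ c → (fun ω => c * k ω) ∈ Kc) ∧
  (∀ k₁ ∈ Kc, ∀ k₂ ∈ Kc, (fun ω => k₁ ω + k₂ ω) ∈ Kc)

/-- `Kc_λ`: the elements of `Kc` bounded below by `-λ • W` quasi surely. -/
def Klam (Ps : Set (Measure Ω)) (W : Ω → ℝ) (Kc : Set (Ω → ℝ)) (l : ℝ) : Set (Ω → ℝ) :=
  {k ∈ Kc | LeQS Ps (fun ω => -l * W ω) k}

/-- The cone `𝒞` of claims super-replicable at zero cost. -/
def coneC (Ps : Set (Measure Ω)) (W : Ω → ℝ) (Kc : Set (Ω → ℝ)) : Set (Ω → ℝ) :=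
  {X | MemLW Ps W X ∧ ∃ k ∈ Kc, LeQS Ps X k}

/-- The set `𝒞_λ`. -/
def coneCLam (Ps : Set (Measure Ω)) (W : Ω → ℝ) (Kc : Set (Ω → ℝ)) (l : ℝ) : Set (Ω → ℝ) :=
  {X | MemLW Ps W X ∧ ∃ k ∈ Klam Ps W Kc l, LeQS Ps X k}

/-- The sensitive cone `𝒞̃`. -/
def coneCTilde (Ps : Set (Measure Ω)) (W : Ω → ℝ) (Kc : Set (Ω → ℝ)) : Set (Ω → ℝ) :=
  {X | MemLW Ps W X ∧ ∀ P ∈ Ps, ∃ k ∈ Kc, ∀ᵐ ω ∂P, X ω ≤ k ω}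

/-- The sensitive set `𝒞̃_λ`. -/
def coneCTildeLam (Ps : Set (Measure Ω)) (W : Ω → ℝ) (Kc : Set (Ω → ℝ)) (l : ℝ) :
    Set (Ω → ℝ) :=
  {X | MemLW Ps W X ∧ ∀ P ∈ Ps, ∃ k ∈ Klam Ps W Kc l, ∀ᵐ ω ∂P, X ω ≤ k ω}

/-- `𝒞̂ = ⋃_{λ ≥ 0} 𝒞̃_λ`. -/
def coneCHat (Ps : Set (Measure Ω)) (W : Ω → ℝ) (Kc : Set (Ω → ℝ)) : Set (Ω → ℝ) :=
  ⋃ l ∈ {r : ℝ | 0 ≤ r}, coneCTildeLam Ps W Kc l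

/-- A set `A ⊆ L^W` is Fatou closed: it is stable under quasi-sure limits of
`‖·‖_W`-bounded sequences. -/
def FatouClosed (Ps : Set (Measure Ω)) (W : Ω → ℝ) (A : Set (Ω → ℝ)) : Prop :=
  ∀ X : ℕ → Ω → ℝ, (∀ n, X n ∈ A) → (∃ m : ℝ, ∀ n, m ∈ Bounds Ps W (X n)) →
    ∀ Y : Ω → ℝ, MemLW Ps W Y →
      Polar Ps {ω | ¬ Tendsto (fun n => X n ω) atTop (nhds (Y ω))} → Y ∈ A

/-- Bounded measurable real-valued function. -/
def BddMeas (X : Ω → ℝ) : Prop := Measurable X ∧ ∃ c : ℝ, ∀ ω, |X ω| ≤ c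

/-- sensitive No Free Lunch with Vanishing Risk: any quasi-surely nonnegative
bounded measurable `ξ` which is a `‖·‖_{Ps,∞}`-limit of elements of `𝒞̃ ∩ L^∞`
vanishes quasi surely. -/
def sNFLVR (Ps : Set (Measure Ω)) (W : Ω → ℝ) (Kc : Set (Ω → ℝ)) : Prop :=
  ∀ ξ : Ω → ℝ, BddMeas ξ → LeQS Ps (fun _ => 0) ξ →
    (∃ X : ℕ → Ω → ℝ,
      (∀ n, X n ∈ coneCTilde Ps W Kc ∧ MemLW Ps (fun _ => 1) (X n)) ∧
      Tendsto (fun n => normW Ps (fun _ => 1) (fun ω => X n ω - ξ ω)) atTop (nhds 0)) →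
    EqQS Ps ξ (fun _ => 0)

/-- No Arbitrage for the cone `Kc`. -/
def NA (Ps : Set (Measure Ω)) (Kc : Set (Ω → ℝ)) : Prop :=
  ∀ k ∈ Kc, LeQS Ps (fun _ => 0) k → EqQS Ps k (fun _ => 0)

/-- `Ps_W`: probability measures dominated by some member of `Ps` and integrating `W`. -/
def PW (Ps : Set (Measure Ω)) (W : Ω → ℝ) : Set (Measure Ω) :=
  {Q | IsProbabilityMeasure Q ∧ (∃ P ∈ Ps, Q ≪ P) ∧ Integrable W Q}

/-- An approximate separating class `(Q_n)_{n ≥ 1}`. -/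
def ApproxSep (Ps : Set (Measure Ω)) (W : Ω → ℝ) (Kc : Set (Ω → ℝ))
    (Q : ℕ → Measure Ω) : Prop :=
  (∀ n : ℕ, 1 ≤ n → Q n ∈ PW Ps W) ∧
  (∃ Pbar ∈ Ps, ∀ n : ℕ, 1 ≤ n → Q n ≪ Pbar) ∧
  (∀ n : ℕ, 1 ≤ n → ∀ X ∈ coneCLam Ps W Kc (n : ℝ), ∫ ω, X ω ∂(Q n) ≤ 1 / (n : ℝ))

/-- `Q_app ≈ Ps` : the approximate separating classes and `Ps` share the same
polar sets. -/
def QappEquivP (Ps : Set (Measure Ω)) (W : Ω → ℝ) (Kc : Set (Ω → ℝ)) : Prop :=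
  ∀ A : Set Ω, MeasurableSet A →
    ((∀ Q : ℕ → Measure Ω, ApproxSep Ps W Kc Q → ∀ n : ℕ, 1 ≤ n → Q n A = 0) ↔ Polar Ps A)

/-- The superhedging-type functional `ρ_A`, with values in `EReal` and the
convention `inf ∅ = +∞`. -/
noncomputable def rho (A : Set (Ω → ℝ)) (X : Ω → ℝ) : EReal :=
  sInf {y : EReal | ∃ x : ℝ, y = (x : EReal) ∧ (fun ω => X ω - x) ∈ A}

end Paper

namespace Paper

/-!
Under sNABR, the claim `Y = 1_A / n` of a non-polar set `A` is not in `𝒞̃_n`, so for some `P ∈ Ps`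
no element of `𝒦_n` dominates `Y` `P`-almost surely. Let `μ` be a finite measure equivalent to `P`
with `W ∈ L²(μ)`, and let `S` be the convex set of `f ∈ L²(μ)` dominated by an element of `𝒦_n`.
Then `Y` is not even in the closure of `S`: along an almost everywhere convergent sequence in `S`
one may clamp to `[-n W, m W]`, because elements of `𝒦_n` are at least `-n W`, and Fatou closedness
of `𝒞` would produce an element of `𝒦_n` dominating `Y`. Hence Hahn–Banach and Riesz give
`g ∈ L²(μ)` strictly separating `Y` from `S`; it is nonnegative because `S` is a lower set, and its
normalisation is the density of `Q_n`, with `δ_n` the normalised separating level.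

Conversely, if `X ∈ 𝒞̃_l` is nonnegative and does not vanish quasi surely, then `{X ≥ 1 / (m + 1)}`
is non-polar for some `m`, and Markov's inequality contradicts the separation for
`n ≥ max l (m + 1)`.
-/

section Separation

lemma map_nonneg_of_isLowerSet_of_lt {E : Type*} [AddCommGroup E] [PartialOrder E]
    [IsOrderedAddMonoid E] {S : Set E} (hS : IsLowerSet S) (hne : S.Nonempty) (φ : E →+ ℝ) {u : ℝ}
    (hu : ∀ f ∈ S, φ f < u) {v : E} (hv : 0 ≤ v) : 0 ≤ φ v := by
  obtain ⟨f, hf⟩ := hne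
  by_contra! hneg
  obtain ⟨n, hn⟩ := Archimedean.arch (u - φ f) (neg_pos.2 hneg)
  have hlt := hu (f - n • v) (hS (sub_le_self f (nsmul_nonneg hv n)) hf)
  rw [map_sub, map_nsmul] at hlt
  rw [smul_neg] at hn
  linarith

variable {α : Type*} [MeasurableSpace α] {μ : Measure α}

lemma nonneg_of_inner_nonneg {g : Lp ℝ 2 μ} (hg : ∀ f : Lp ℝ 2 μ, 0 ≤ f → 0 ≤ inner ℝ g f) :
    0 ≤ g := by
  refine (Lp.coeFn_nonneg g).1 <| AEFinStronglyMeasurable.ae_nonneg_of_forall_setIntegral_nonneg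
    (Lp.finStronglyMeasurable g (by norm_num) (by norm_num)).aefinStronglyMeasurable
    (fun s _ hμs ↦ integrableOn_Lp_of_measure_ne_top g (by norm_num) hμs.ne) fun s hs hμs ↦ ?_
  rw [← L2.inner_indicatorConstLp_one (𝕜 := ℝ) hs hμs.ne g, real_inner_comm]
  refine hg _ ((Lp.coeFn_nonneg _).1 ?_)
  filter_upwards [indicatorConstLp_coeFn (p := 2) (hs := hs) (hμs := hμs.ne) (c := (1 : ℝ))]
    with a ha
  rw [ha]
  exact Set.indicator_nonneg (fun _ _ ↦ zero_le_one) a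

lemma exists_nonneg_inner_lt_of_notMem_closure {S : Set (Lp ℝ 2 μ)} (hconv : Convex ℝ S)
    (hlower : IsLowerSet S) (hne : S.Nonempty) {y : Lp ℝ 2 μ} (hy : y ∉ closure S) :
    ∃ g : Lp ℝ 2 μ, 0 ≤ g ∧ ∃ u : ℝ, (∀ f ∈ S, inner ℝ g f < u) ∧ u < inner ℝ g y := by
  obtain ⟨φ, u, hu, huy⟩ := geometric_hahn_banach_closed_point hconv.closure isClosed_closure hy
  refine ⟨(InnerProductSpace.toDual ℝ _).symm φ, nonneg_of_inner_nonneg fun f hf ↦ ?_, u, ?_, ?_⟩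
  · rw [InnerProductSpace.toDual_symm_apply]
    exact map_nonneg_of_isLowerSet_of_lt hlower hne (φ : Lp ℝ 2 μ →+ ℝ)
      (fun f hf ↦ hu f (subset_closure hf)) hf
  · simpa only [InnerProductSpace.toDual_symm_apply] using fun f hf ↦ hu f (subset_closure hf)
  · rwa [InnerProductSpace.toDual_symm_apply]

lemma inner_toLp_eq_integral_mul (g : Lp ℝ 2 μ) {X : α → ℝ} (hX : MemLp X 2 μ) :
    inner ℝ g (hX.toLp X) = ∫ a, g a * X a ∂μ := by
  rw [L2.inner_def]
  refine integral_congr_ae ?_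
  filter_upwards [hX.coeFn_toLp] with a ha
  rw [ha]
  exact mul_comm _ _

lemma exists_isFiniteMeasure_memLp_two (P : Measure α) [SFinite P] {W : α → ℝ}
    (hW : Measurable W) :
    ∃ μ : Measure α, IsFiniteMeasure μ ∧ μ ≪ P ∧ P ≪ μ ∧ MemLp W 2 μ := by
  let ρ (a : α) : ENNReal := ENNReal.ofReal (1 + W a ^ 2)⁻¹
  have hρ : Measurable ρ := by fun_prop
  have hρ_pos (a : α) : ρ a ≠ 0 := by positivity
  have hρ_le (a : α) : ρ a ≤ 1 :=
    ENNReal.ofReal_le_one.2 (inv_le_one_of_one_le₀ (le_add_of_nonneg_right (sq_nonneg _)))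
  refine ⟨P.toFinite.withDensity ρ,
    isFiniteMeasure_withDensity (((lintegral_mono hρ_le).trans_lt (by simp)).ne),
    (withDensity_absolutelyContinuous _ _).trans (toFinite_absolutelyContinuous P),
    (absolutelyContinuous_toFinite P).trans
      (withDensity_absolutelyContinuous' hρ.aemeasurable (.of_forall hρ_pos)), ?_⟩
  rw [memLp_two_iff_integrable_sq hW.aestronglyMeasurable,
    integrable_withDensity_iff_integrable_smul' hρ (.of_forall fun _ ↦ ENNReal.ofReal_lt_top)]
  refine .of_bound (C := 1) (by fun_prop) (.of_forall fun a ↦ ?_)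
  have hpos : 0 < 1 + W a ^ 2 := by positivity
  rw [ENNReal.toReal_ofReal (by positivity), smul_eq_mul, Real.norm_of_nonneg (by positivity),
    inv_mul_le_one₀ hpos]
  exact le_add_of_nonneg_left zero_le_one

lemma exists_isProbabilityMeasure_integral_eq {g : α → ℝ} (hg : Integrable g μ) (hg0 : 0 ≤ᵐ[μ] g)
    (hne : ¬ g =ᵐ[μ] 0) :
    ∃ c : ℝ, 0 < c ∧ ∃ Q : Measure α, IsProbabilityMeasure Q ∧ Q ≪ μ ∧
      (∀ X : α → ℝ, Integrable (fun a ↦ g a * X a) μ → Integrable X Q) ∧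
      ∀ X : α → ℝ, ∫ a, X a ∂Q = c * ∫ a, g a * X a ∂μ := by
  have hint_pos : 0 < ∫ a, g a ∂μ := (integral_nonneg_of_ae hg0).lt_of_ne' fun h ↦
    hne ((integral_eq_zero_iff_of_nonneg_ae hg0 hg).1 h)
  set c : ℝ := (∫ a, g a ∂μ)⁻¹
  have hc_pos : 0 < c := inv_pos.2 hint_pos
  let ρ (a : α) : ENNReal := ENNReal.ofReal (c * g a)
  have hρ : AEMeasurable ρ μ := (hg.const_mul c).aemeasurable.ennreal_ofReal
  have hρ_top : ∀ᵐ a ∂μ, ρ a < ⊤ := .of_forall fun _ ↦ ENNReal.ofReal_lt_top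
  have hρ_smul (X : α → ℝ) : (fun a ↦ (ρ a).toReal • X a) =ᵐ[μ] fun a ↦ c * (g a * X a) := by
    filter_upwards [hg0] with a ha
    rw [ENNReal.toReal_ofReal (mul_nonneg hc_pos.le ha), smul_eq_mul, mul_assoc]
  refine ⟨c, hc_pos, μ.withDensity ρ, ⟨?_⟩, withDensity_absolutelyContinuous _ _,
    fun X hX ↦ ?_, fun X ↦ ?_⟩
  · rw [withDensity_apply _ .univ, Measure.restrict_univ,
      ← ofReal_integral_eq_lintegral_ofReal (hg.const_mul c)
        (hg0.mono fun a ha ↦ mul_nonneg hc_pos.le ha), integral_const_mul,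
      inv_mul_cancel₀ hint_pos.ne', ENNReal.ofReal_one]
  · rw [integrable_withDensity_iff_integrable_smul₀' hρ hρ_top]
    exact (hX.const_mul c).congr (hρ_smul X).symm
  · rw [integral_withDensity_eq_integral_toReal_smul₀ hρ hρ_top, integral_congr_ae (hρ_smul X),
      integral_const_mul]

/-- The square-integrable functions dominated `μ`-almost everywhere by an element of `K`: the convex
set of superhedgeable claims which is separated from an arbitrage. The elements of `K` themselves
need be neither measurable nor integrable. -/
def dominatedL2 (μ : Measure α) (K : Set (α → ℝ)) : Set (Lp ℝ 2 μ) :=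
  {f | ∃ k ∈ K, f ≤ᵐ[μ] k}

lemma isLowerSet_dominatedL2 (K : Set (α → ℝ)) : IsLowerSet (dominatedL2 μ K) :=
  fun _ _ hle ⟨k, hk, hfk⟩ ↦ ⟨k, hk, ((Lp.coeFn_le _ _).2 hle).trans hfk⟩

lemma convex_dominatedL2 {K : Set (α → ℝ)} (hK : Convex ℝ K) : Convex ℝ (dominatedL2 μ K) := by
  rintro f ⟨k, hk, hfk⟩ f' ⟨k', hk', hfk'⟩ a b ha hb hab
  refine ⟨a • k + b • k', hK hk hk' ha hb hab, ?_⟩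
  filter_upwards [Lp.coeFn_add (a • f) (b • f'), Lp.coeFn_smul a f, Lp.coeFn_smul b f', hfk, hfk']
    with x hadd hsmul hsmul' hx hx'
  simp only [hadd, hsmul, hsmul', Pi.add_apply, Pi.smul_apply, smul_eq_mul]
  gcongr

lemma toLp_mem_dominatedL2 {K : Set (α → ℝ)} {X k : α → ℝ} (hX : MemLp X 2 μ) (hk : k ∈ K)
    (hXk : X ≤ᵐ[μ] k) : hX.toLp X ∈ dominatedL2 μ K :=
  ⟨k, hk, hX.coeFn_toLp.trans_le hXk⟩

end Separation

section QuasiSure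

variable {Ω : Type*} [MeasurableSpace Ω] {Ps : Set (Measure Ω)} {W X : Ω → ℝ} {Kc : Set (Ω → ℝ)}
  {l m : ℝ} {P μ : Measure Ω}

/-- The filter of sets with `Ps`-polar complement, so that `∀ᶠ ω in qs Ps, p ω` means that `p`
holds `Ps`-quasi surely. -/
def qs (Ps : Set (Measure Ω)) : Filter Ω :=
  Filter.ofCountableUnion {N | Polar Ps N}
    (fun S hS hpolar ↦ by
      choose! N' hmeas hsub hnull using hpolar
      exact ⟨⋃ N ∈ S, N' N, .biUnion hS hmeas, Set.sUnion_subset fun N hN ↦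
        (hsub N hN).trans (Set.subset_biUnion_of_mem hN),
        fun P hP ↦ (measure_biUnion_null_iff hS).2 fun N hN ↦ hnull N hN P hP⟩)
    (fun _ ⟨N', hmeas, hsub, hnull⟩ _ h ↦ ⟨N', hmeas, h.trans hsub, hnull⟩)

instance : CountableInterFilter (qs Ps) :=
  countableInter_ofCountableUnion _ _ _

lemma eventually_qs {p : Ω → Prop} : (∀ᶠ ω in qs Ps, p ω) ↔ Polar Ps {ω | ¬ p ω} := Iff.rfl

lemma eventuallyLE_qs {X Y : Ω → ℝ} : X ≤ᶠ[qs Ps] Y ↔ LeQS Ps X Y := Iff.rfl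

lemma eventuallyEq_qs {X Y : Ω → ℝ} : X =ᶠ[qs Ps] Y ↔ EqQS Ps X Y := Iff.rfl

lemma ae_le_qs (hP : P ∈ Ps) (hμ : μ ≪ P) : ae μ ≤ qs Ps := fun _ ⟨_, _, hsub, hnull⟩ ↦
  measure_mono_null hsub (hμ (hnull P hP))

lemma MemLW.exists_abs_le (hX : MemLW Ps W X) : ∃ m, 0 ≤ m ∧ ∀ᶠ ω in qs Ps, |X ω| ≤ m * W ω := by
  obtain ⟨m, hm, hXm⟩ := hX.2
  exact ⟨m, hm, eventually_qs.2 (by simpa only [not_le] using hXm)⟩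

lemma mem_bounds_of_abs_le (hm : 0 ≤ m) (h : ∀ ω, |X ω| ≤ m * W ω) : m ∈ Bounds Ps W X :=
  ⟨hm, ∅, .empty, fun ω hω ↦ (h ω).not_gt hω, fun _ _ ↦ measure_empty⟩

lemma BddMeas.memLW (hX : BddMeas X) (hW : ∀ ω, 1 ≤ W ω) : MemLW Ps W X := by
  obtain ⟨hmeas, c, hc⟩ := hX
  exact ⟨hmeas, |c|, mem_bounds_of_abs_le (abs_nonneg c) fun ω ↦
    ((hc ω).trans (le_abs_self c)).trans (le_mul_of_one_le_right (abs_nonneg c) (hW ω))⟩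

lemma MemLW.memLp {p : ENNReal} (hX : MemLW Ps W X) (hμ : ae μ ≤ qs Ps) (hW : MemLp W p μ) :
    MemLp X p μ := by
  obtain ⟨m, hm, hXm⟩ := hX.exists_abs_le
  refine hW.of_le_mul (c := m) hX.1.aestronglyMeasurable ?_
  filter_upwards [hμ hXm] with ω hω
  exact hω.trans (mul_le_mul_of_nonneg_left (le_abs_self _) hm)

lemma eventually_le_of_mem_Klam {k : Ω → ℝ} (hk : k ∈ Klam Ps W Kc l) :
    ∀ᶠ ω in qs Ps, -l * W ω ≤ k ω := hk.2

lemma Klam_mono (hW : ∀ ω, 0 ≤ W ω) (hlm : l ≤ m) : Klam Ps W Kc l ⊆ Klam Ps W Kc m :=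
  fun _ hk ↦ ⟨hk.1, (eventually_le_of_mem_Klam hk).mono fun ω hω ↦
    (mul_le_mul_of_nonneg_right (neg_le_neg hlm) (hW ω)).trans hω⟩

lemma coneCTildeLam_mono (hW : ∀ ω, 0 ≤ W ω) (hlm : l ≤ m) :
    coneCTildeLam Ps W Kc l ⊆ coneCTildeLam Ps W Kc m := fun _ ⟨hX, hdom⟩ ↦
  ⟨hX, fun P hP ↦ (hdom P hP).imp fun _ hk ↦ ⟨Klam_mono hW hlm hk.1, hk.2⟩⟩

lemma IsConvexCone.convex (hKc : IsConvexCone Kc) : Convex ℝ Kc :=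
  fun k hk k' hk' a b ha hb _ ↦ hKc.2.2.2 _ (hKc.2.2.1 k hk a ha) _ (hKc.2.2.1 k' hk' b hb)

lemma convex_Klam (hKc : Convex ℝ Kc) : Convex ℝ (Klam Ps W Kc l) := by
  intro k hk k' hk' a b ha hb hab
  refine ⟨hKc hk.1 hk'.1 ha hb hab, ?_⟩
  filter_upwards [eventually_le_of_mem_Klam hk, eventually_le_of_mem_Klam hk'] with ω hω hω'
  calc -l * W ω = a * (-l * W ω) + b * (-l * W ω) := by rw [← add_mul, hab, one_mul]
    _ ≤ a * k ω + b * k' ω := by gcongr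

lemma zero_mem_Klam (h0 : 0 ∈ Kc) (hW : ∀ ω, 0 ≤ W ω) (hl : 0 ≤ l) : 0 ∈ Klam Ps W Kc l :=
  ⟨h0, Eventually.of_forall (f := qs Ps) fun ω ↦
    mul_nonpos_of_nonpos_of_nonneg (neg_nonpos.2 hl) (hW ω)⟩

lemma zero_mem_coneCTildeLam (h0 : 0 ∈ Kc) (hW : ∀ ω, 0 ≤ W ω) (hl : 0 ≤ l) :
    0 ∈ coneCTildeLam Ps W Kc l :=
  ⟨⟨measurable_zero, 0, mem_bounds_of_abs_le le_rfl fun _ ↦ by simp⟩,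
    fun _ _ ↦ ⟨0, zero_mem_Klam h0 hW hl, ae_of_all _ fun _ ↦ le_rfl⟩⟩

lemma exists_mem_Klam_qs_le_of_tendsto (hFatou : FatouClosed Ps W (coneC Ps W Kc))
    (hWmeas : Measurable W) (hW : ∀ ω, 0 ≤ W ω) (hl : 0 ≤ l)
    {f : ℕ → Ω → ℝ} {g : Ω → ℝ} (hf : ∀ i, Measurable (f i)) (hg : Measurable g)
    (hdom : ∀ i, ∃ k ∈ Klam Ps W Kc l, f i ≤ᶠ[qs Ps] k)
    (hlim : ∀ᶠ ω in qs Ps, Tendsto (f · ω) atTop (𝓝 (g ω)))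
    (hgm : ∀ᶠ ω in qs Ps, g ω ≤ m * W ω) :
    ∃ k ∈ Klam Ps W Kc l, g ≤ᶠ[qs Ps] k := by
  -- Fatou closedness needs a `W`-bounded sequence: clamp to `[-l * W, m * W]`, which preserves
  -- domination because the elements of `Klam Ps W Kc l` are at least `-l * W`.
  let clamp (h : Ω → ℝ) (ω : Ω) : ℝ := max (-l * W ω) (min (m * W ω) (h ω))
  have clamp_meas {h : Ω → ℝ} (hh : Measurable h) : Measurable (clamp h) :=
    (hWmeas.const_mul _).max ((hWmeas.const_mul m).min hh)
  have clamp_bound (h : Ω → ℝ) : max l m ∈ Bounds Ps W (clamp h) := by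
    refine mem_bounds_of_abs_le (hl.trans (le_max_left l m)) fun ω ↦ abs_le.2 ⟨?_, ?_⟩
    · rw [← neg_mul]
      exact (mul_le_mul_of_nonneg_right (neg_le_neg (le_max_left l m)) (hW ω)).trans
        (le_max_left _ _)
    · refine max_le ?_ ((min_le_left _ _).trans ?_) <;> refine mul_le_mul_of_nonneg_right ?_ (hW ω)
      · exact (neg_le_self hl).trans (le_max_left l m)
      · exact le_max_right l m
  have clamp_mem (i : ℕ) : clamp (f i) ∈ coneC Ps W Kc := by
    obtain ⟨k, hk, hfk⟩ := hdom i
    refine ⟨⟨clamp_meas (hf i), _, clamp_bound _⟩, k, hk.1, ?_⟩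
    filter_upwards [eventually_le_of_mem_Klam hk, hfk] with ω hω hω'
    exact max_le hω ((min_le_right _ _).trans hω')
  have clamp_lim : ∀ᶠ ω in qs Ps, Tendsto (fun i ↦ clamp (f i) ω) atTop (𝓝 (clamp g ω)) :=
    hlim.mono fun ω hω ↦ tendsto_const_nhds.max (tendsto_const_nhds.min hω)
  obtain ⟨-, k, hk, hgk⟩ := hFatou _ clamp_mem ⟨_, fun i ↦ clamp_bound _⟩ (clamp g)
    ⟨clamp_meas hg, _, clamp_bound _⟩ clamp_lim
  rw [← eventuallyLE_qs] at hgk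
  refine ⟨k, ⟨hk, hgk.mono fun ω hω ↦ (le_max_left _ _).trans hω⟩, ?_⟩
  filter_upwards [hgk, hgm] with ω hω hωm
  exact ((le_min hωm le_rfl).trans (le_max_right _ _)).trans hω

lemma exists_mem_Klam_ae_le_of_tendsto (hFatou : FatouClosed Ps W (coneC Ps W Kc))
    (hWmeas : Measurable W) (hW : ∀ ω, 0 ≤ W ω) (hl : 0 ≤ l) (hm : 0 ≤ m) (hμ : ae μ ≤ qs Ps)
    {f : ℕ → Ω → ℝ} {g : Ω → ℝ} (hf : ∀ i, Measurable (f i)) (hg : Measurable g)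
    (hdom : ∀ i, ∃ k ∈ Klam Ps W Kc l, f i ≤ᵐ[μ] k)
    (hlim : ∀ᵐ ω ∂μ, Tendsto (f · ω) atTop (𝓝 (g ω))) (hgm : ∀ᵐ ω ∂μ, g ω ≤ m * W ω) :
    ∃ k ∈ Klam Ps W Kc l, g ≤ᵐ[μ] k := by
  classical
  choose k hk hfk using hdom
  obtain ⟨N, hbad, hN, hμN⟩ := exists_measurable_superset_of_null
    (ae_iff.1 ((ae_all_iff.2 hfk).and (hlim.and hgm)))
  have good {ω : Ω} (hω : ω ∉ N) := of_not_not fun h ↦ hω (hbad h)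
  -- Lowering every function to `-l * W` on the null set `N` makes the hypotheses hold q.s.
  let lower (h : Ω → ℝ) : Ω → ℝ := N.piecewise (fun ω ↦ -l * W ω) h
  have lower_eq_on {ω : Ω} (hω : ω ∈ N) (h : Ω → ℝ) : lower h ω = -l * W ω :=
    N.piecewise_eq_of_mem _ _ hω
  have lower_eq_off {ω : Ω} (hω : ω ∉ N) (h : Ω → ℝ) : lower h ω = h ω :=
    N.piecewise_eq_of_notMem _ _ hω
  have lower_meas {h : Ω → ℝ} (hh : Measurable h) : Measurable (lower h) :=
    (hWmeas.const_mul _).piecewise hN hh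
  have lower_dom (i : ℕ) : ∃ k ∈ Klam Ps W Kc l, lower (f i) ≤ᶠ[qs Ps] k := by
    refine ⟨k i, hk i, (eventually_le_of_mem_Klam (hk i)).mono fun ω hω ↦ ?_⟩
    by_cases hωN : ω ∈ N
    · rwa [lower_eq_on hωN]
    · simpa only [lower_eq_off hωN] using (good hωN).1 i
  have lower_lim (ω : Ω) : Tendsto (fun i ↦ lower (f i) ω) atTop (𝓝 (lower g ω)) := by
    by_cases hωN : ω ∈ N
    · simpa only [lower_eq_on hωN] using tendsto_const_nhds
    · simpa only [lower_eq_off hωN] using (good hωN).2.1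
  have lower_le : lower g ≤ fun ω ↦ m * W ω := N.piecewise_le
    (fun ω _ ↦ mul_le_mul_of_nonneg_right ((neg_nonpos.2 hl).trans hm) (hW ω))
    (fun ω hω ↦ (good hω).2.2)
  obtain ⟨k', hk', hgk'⟩ := exists_mem_Klam_qs_le_of_tendsto hFatou hWmeas hW hl
    (fun i ↦ lower_meas (hf i)) (lower_meas hg) lower_dom (.of_forall lower_lim)
    (.of_forall lower_le)
  refine ⟨k', hk', ?_⟩
  filter_upwards [hgk'.filter_mono hμ, measure_eq_zero_iff_ae_notMem.1 hμN] with ω hω hωN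
  rwa [lower_eq_off hωN] at hω

end QuasiSure

section FundamentalTheorem

variable {Ω : Type*} [MeasurableSpace Ω] {Ps : Set (Measure Ω)} {W Y : Ω → ℝ} {Kc : Set (Ω → ℝ)}
  {l : ℝ} {P μ : Measure Ω}

/-- Sensitive No Arbitrage with Bounded Risk: the only quasi-surely nonnegative bounded measurable
element of `𝒞̂` is `0`, up to quasi-sure equality. -/
def sNABR (Ps : Set (Measure Ω)) (W : Ω → ℝ) (Kc : Set (Ω → ℝ)) : Prop :=
  ∀ X : Ω → ℝ, BddMeas X → LeQS Ps (fun _ => 0) X → X ∈ coneCHat Ps W Kc → EqQS Ps X (fun _ => 0)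

lemma exists_mem_Klam_ae_le_of_toLp_mem_closure (hFatou : FatouClosed Ps W (coneC Ps W Kc))
    (hWmeas : Measurable W) (hW : ∀ ω, 0 ≤ W ω) (hl : 0 ≤ l) (hμ : ae μ ≤ qs Ps)
    (hY : MemLW Ps W Y) (hY2 : MemLp Y 2 μ)
    (hcl : hY2.toLp Y ∈ closure (dominatedL2 μ (Klam Ps W Kc l))) :
    ∃ k ∈ Klam Ps W Kc l, Y ≤ᵐ[μ] k := by
  obtain ⟨f, hf, hlim⟩ := mem_closure_iff_seq_limit.1 hcl
  obtain ⟨φ, -, hφ⟩ := (tendstoInMeasure_of_tendsto_Lp hlim).exists_seq_tendsto_ae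
  obtain ⟨m, hm, hYm⟩ := hY.exists_abs_le
  refine exists_mem_Klam_ae_le_of_tendsto hFatou hWmeas hW hl hm hμ
    (fun i ↦ (Lp.stronglyMeasurable (f (φ i))).measurable) hY.1 (fun i ↦ hf (φ i)) ?_
    (hμ (hYm.mono fun ω hω ↦ (le_abs_self _).trans hω))
  filter_upwards [hφ, hY2.coeFn_toLp] with ω hω hYω
  rwa [hYω] at hω

lemma exists_separating_measure_of_forall_not_ae_le (hFatou : FatouClosed Ps W (coneC Ps W Kc))
    (hWmeas : Measurable W) (hW : ∀ ω, 0 ≤ W ω) (hKc : Convex ℝ Kc) (h0 : 0 ∈ Kc) (hl : 0 ≤ l)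
    (hP : P ∈ Ps) [SFinite P] (hY : MemLW Ps W Y)
    (hPY : ∀ k ∈ Klam Ps W Kc l, ¬ Y ≤ᵐ[P] k) :
    ∃ Q ∈ PW Ps W, ∃ u : ℝ, (∀ X ∈ coneCTildeLam Ps W Kc l, ∫ ω, X ω ∂Q < u) ∧
      u < ∫ ω, Y ω ∂Q := by
  obtain ⟨μ, _, hμP, hPμ, hW2⟩ := exists_isFiniteMeasure_memLp_two P hWmeas
  have hμ : ae μ ≤ qs Ps := ae_le_qs hP hμP
  have hY2 : MemLp Y 2 μ := hY.memLp hμ hW2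
  have h0S : 0 ∈ dominatedL2 μ (Klam Ps W Kc l) :=
    ⟨0, zero_mem_Klam h0 hW hl, (Lp.coeFn_zero ℝ 2 μ).le⟩
  have hY_closure : hY2.toLp Y ∉ closure (dominatedL2 μ (Klam Ps W Kc l)) := fun hcl ↦ by
    obtain ⟨k, hk, hYk⟩ :=
      exists_mem_Klam_ae_le_of_toLp_mem_closure hFatou hWmeas hW hl hμ hY hY2 hcl
    exact hPY k hk (hPμ hYk)
  obtain ⟨g, hg0, u, hu, huY⟩ := exists_nonneg_inner_lt_of_notMem_closure
    (convex_dominatedL2 (convex_Klam hKc)) (isLowerSet_dominatedL2 _) ⟨0, h0S⟩ hY_closure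
  have hg_ne : ¬ g =ᵐ[μ] 0 := fun h ↦ by
    have hg_zero : g = 0 := (Lp.eq_zero_iff_ae_eq_zero).2 h
    have hu0 := hu 0 h0S
    rw [hg_zero, inner_zero_left] at hu0 huY
    exact hu0.not_gt huY
  obtain ⟨c, hc, Q, hQ, hQμ, hQ_int, hQ_eq⟩ := exists_isProbabilityMeasure_integral_eq
    ((Lp.memLp g).integrable one_le_two) ((Lp.coeFn_nonneg g).2 hg0) hg_ne
  refine ⟨Q, ⟨hQ, ⟨P, hP, hQμ.trans hμP⟩, hQ_int W ((Lp.memLp g).integrable_mul hW2)⟩, c * u,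
    fun X hX ↦ ?_, ?_⟩
  · obtain ⟨k, hk, hXk⟩ := hX.2 P hP
    rw [hQ_eq, ← inner_toLp_eq_integral_mul g (hX.1.memLp hμ hW2)]
    exact mul_lt_mul_of_pos_left (hu _ (toLp_mem_dominatedL2 _ hk (hμP hXk))) hc
  · rw [hQ_eq, ← inner_toLp_eq_integral_mul g hY2]
    exact mul_lt_mul_of_pos_left huY hc

lemma sNABR.exists_forall_not_ae_le (hNA : sNABR Ps W Kc) (hW : ∀ ω, 1 ≤ W ω) (hl : 0 ≤ l)
    (hY : BddMeas Y) (hY0 : 0 ≤ᶠ[qs Ps] Y) (hne : ¬ Y =ᶠ[qs Ps] 0) :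
    ∃ P ∈ Ps, ∀ k ∈ Klam Ps W Kc l, ¬ Y ≤ᵐ[P] k := by
  by_contra! hdom
  have hYhat : Y ∈ coneCHat Ps W Kc :=
    Set.mem_biUnion (show l ∈ {r : ℝ | 0 ≤ r} from hl) ⟨hY.memLW hW, hdom⟩
  exact hne (eventuallyEq_qs.2 (hNA Y hY (eventuallyLE_qs.1 hY0) hYhat))

lemma sNABR.exists_separating_measure (hNA : sNABR Ps W Kc)
    (hFatou : FatouClosed Ps W (coneC Ps W Kc)) (hPs : ∀ P ∈ Ps, SFinite P)
    (hWmeas : Measurable W) (hW : ∀ ω, 1 ≤ W ω) (hKc : Convex ℝ Kc) (h0 : 0 ∈ Kc)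
    {A : Set Ω} (hA : MeasurableSet A) (hA_polar : ¬ Polar Ps A) {n : ℕ} (hn : 1 ≤ n) :
    ∃ δ : ℝ, 0 < δ ∧ δ ≤ 1 / (n : ℝ) ∧ ∃ Q ∈ PW Ps W,
      ENNReal.ofReal ((n : ℝ) * δ) < Q A ∧
      ∀ X ∈ coneCTildeLam Ps W Kc (n : ℝ), ∫ ω, X ω ∂Q < δ := by
  have hn_pos : (0 : ℝ) < n := by exact_mod_cast hn
  have hW0 (ω : Ω) : 0 ≤ W ω := zero_le_one.trans (hW ω)
  let Y : Ω → ℝ := A.indicator fun _ ↦ 1 / (n : ℝ)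
  have hY0 (ω : Ω) : 0 ≤ Y ω := Set.indicator_nonneg (fun _ _ ↦ by positivity) ω
  have hY : BddMeas Y := ⟨measurable_const.indicator hA, 1 / n, fun ω ↦ by
    rw [abs_of_nonneg (hY0 ω)]
    exact Set.indicator_le_self' (fun _ _ ↦ by positivity) ω⟩
  have hY_support : {ω | Y ω ≠ 0} = A := by
    ext ω
    simp [Y, Nat.one_le_iff_ne_zero.1 hn]
  have hY_ne : ¬ Y =ᶠ[qs Ps] 0 := fun h ↦ hA_polar (hY_support ▸ eventuallyEq_qs.1 h)
  obtain ⟨P, hP, hPY⟩ := hNA.exists_forall_not_ae_le hW hn_pos.le hY (.of_forall hY0) hY_ne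
  have := hPs P hP
  obtain ⟨Q, hQ, δ, hδ, hδY⟩ := exists_separating_measure_of_forall_not_ae_le hFatou hWmeas hW0
    hKc h0 hn_pos.le hP (hY.memLW hW) hPY
  have := hQ.1
  have hδ_pos : 0 < δ := by
    simpa only [Pi.zero_apply, integral_zero] using
      hδ 0 (zero_mem_coneCTildeLam h0 hW0 hn_pos.le)
  have hQA : n * δ < Q.real A := by
    rwa [integral_indicator_const _ hA, smul_eq_mul, mul_one_div, lt_div_iff₀' hn_pos] at hδY
  refine ⟨δ, hδ_pos, ?_, Q, hQ, ?_, hδ⟩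
  · rw [le_div_iff₀' hn_pos]
    exact hQA.le.trans measureReal_le_one
  · rwa [ENNReal.ofReal_lt_iff_lt_toReal (by positivity) (measure_ne_top Q A)]

lemma exists_not_polar_one_div_le (hY0 : 0 ≤ᶠ[qs Ps] Y) (hne : ¬ Y =ᶠ[qs Ps] 0) :
    ∃ m : ℕ, ¬ Polar Ps {ω | 1 / ((m : ℝ) + 1) ≤ Y ω} := by
  by_contra! hpolar
  have hlt : ∀ᶠ ω in qs Ps, ∀ m : ℕ, Y ω < 1 / ((m : ℝ) + 1) :=
    eventually_countable_forall.2 fun m ↦ eventually_qs.2 (by simpa only [not_lt] using hpolar m)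
  refine hne ?_
  filter_upwards [hY0, hlt] with ω hω hωlt
  refine hω.antisymm' (not_lt.1 fun hpos ↦ ?_)
  obtain ⟨m, hm⟩ := exists_nat_one_div_lt hpos
  exact (hωlt m).not_gt hm

lemma sNABR_of_forall_exists_separating_measure (hW : ∀ ω, 0 ≤ W ω)
    (hsep : ∀ A : Set Ω, MeasurableSet A → ¬ Polar Ps A → ∀ n : ℕ, 1 ≤ n →
      ∃ δ : ℝ, ∃ Q ∈ PW Ps W, ENNReal.ofReal ((n : ℝ) * δ) < Q A ∧
        ∀ X ∈ coneCTildeLam Ps W Kc (n : ℝ), ∫ ω, X ω ∂Q < δ) :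
    sNABR Ps W Kc := by
  intro X hX hX0 hXhat
  by_contra hne
  obtain ⟨l, -, hXl⟩ := Set.mem_iUnion₂.1 hXhat
  obtain ⟨m, hm⟩ := exists_not_polar_one_div_le hX0 hne
  set A : Set Ω := {ω | 1 / ((m : ℝ) + 1) ≤ X ω}
  let n : ℕ := max (m + 1) ⌈l⌉₊
  have hmn : (m : ℝ) + 1 ≤ n := by exact_mod_cast le_max_left (m + 1) ⌈l⌉₊
  have hln : l ≤ n := (Nat.le_ceil l).trans (by exact_mod_cast le_max_right (m + 1) ⌈l⌉₊)
  obtain ⟨δ, Q, ⟨hQ, ⟨P, hP, hQP⟩, hWint⟩, hQA, hQlt⟩ := hsep A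
    (measurableSet_le measurable_const hX.1) hm n ((Nat.le_add_left 1 m).trans (le_max_left _ _))
  have hQqs : ae Q ≤ qs Ps := ae_le_qs hP hQP
  have hX0_ae : 0 ≤ᵐ[Q] X := hQqs hX0
  have hX_int : Integrable X Q :=
    memLp_one_iff_integrable.1 (hXl.1.memLp hQqs (memLp_one_iff_integrable.2 hWint))
  have hXδ : ∫ ω, X ω ∂Q < δ := hQlt X (coneCTildeLam_mono hW hln hXl)
  have hδ_pos : 0 < δ := (integral_nonneg_of_ae hX0_ae).trans_lt hXδ
  have hQA_real : n * δ < Q.real A :=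
    (ENNReal.ofReal_lt_iff_lt_toReal (by positivity) (measure_ne_top Q A)).1 hQA
  have hlt : (m + 1) * δ < (m + 1) * δ := calc
    (m + 1) * δ ≤ n * δ := by gcongr
    _ < Q.real A := hQA_real
    _ = (m + 1) * (1 / (m + 1) * Q.real A) := by field_simp
    _ ≤ (m + 1) * ∫ ω, X ω ∂Q := by
      gcongr
      exact mul_meas_ge_le_integral_of_nonneg hX0_ae hX_int _
    _ < (m + 1) * δ := by gcongr
  exact hlt.false

theorem sNABR_FTAP_general {Ω : Type*} [MeasurableSpace Ω]
    (Ps : Set (Measure Ω)) (hPs : ∀ P ∈ Ps, SFinite P)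
    (W : Ω → ℝ) (hWmeas : Measurable W) (hW1 : ∀ ω, 1 ≤ W ω)
    (Kc : Set (Ω → ℝ)) (hKc : Convex ℝ Kc) (h0 : 0 ∈ Kc)
    (hFatou : FatouClosed Ps W (coneC Ps W Kc)) :
    sNABR Ps W Kc ↔
      ∀ A : Set Ω, MeasurableSet A → ¬ Polar Ps A →
        ∀ n : ℕ, 1 ≤ n →
          ∃ δ : ℝ, 0 < δ ∧ δ ≤ 1 / (n : ℝ) ∧ ∃ Q ∈ PW Ps W,
            ENNReal.ofReal ((n : ℝ) * δ) < Q A ∧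
            ∀ X ∈ coneCTildeLam Ps W Kc (n : ℝ), ∫ ω, X ω ∂Q < δ := by
  refine ⟨fun hNA A hA hA_polar n hn ↦
    hNA.exists_separating_measure hFatou hPs hWmeas hW1 hKc h0 hA hA_polar hn, fun hsep ↦ ?_⟩
  refine sNABR_of_forall_exists_separating_measure (fun ω ↦ zero_le_one.trans (hW1 ω))
    fun A hA hA_polar n hn ↦ ?_
  obtain ⟨δ, -, -, hQ⟩ := hsep A hA hA_polar n hn
  exact ⟨δ, hQ⟩

end FundamentalTheorem

/-- **Theorem (`FTAP1`).** Assume `𝒞` is Fatou closed. Then sNABR holds iff for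
every non-polar `A` and every `n ≥ 1` there are `0 < δ_n ≤ 1/n` and
`Q_n ∈ 𝒫_W` with `Q_n(A) > n δ_n` and `∫ X dQ_n < δ_n` for all `X ∈ 𝒞̃_n`. -/
theorem sNABR_FTAP {Ω : Type*} [MeasurableSpace Ω]
    (Ps : Set (Measure Ω)) (hPsne : Ps.Nonempty)
    (hPsprob : ∀ P ∈ Ps, IsProbabilityMeasure P)
    (W : Ω → ℝ) (hWmeas : Measurable W) (hW1 : ∀ ω, 1 ≤ W ω)
    (Kc : Set (Ω → ℝ)) (hKc : IsConvexCone Kc)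
    (hFatou : FatouClosed Ps W (coneC Ps W Kc)) :
    (∀ X : Ω → ℝ, BddMeas X → LeQS Ps (fun _ => 0) X → X ∈ coneCHat Ps W Kc →
        EqQS Ps X (fun _ => 0)) ↔
      (∀ A : Set Ω, MeasurableSet A → ¬ Polar Ps A →
        ∀ n : ℕ, 1 ≤ n →
          ∃ δ : ℝ, 0 < δ ∧ δ ≤ 1 / (n : ℝ) ∧ ∃ Q ∈ PW Ps W,
            ENNReal.ofReal ((n : ℝ) * δ) < Q A ∧
            ∀ X ∈ coneCTildeLam Ps W Kc (n : ℝ), ∫ ω, X ω ∂Q < δ) := by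
  have (P) (hP : P ∈ Ps) : SFinite P := have := hPsprob P hP; inferInstance
  exact sNABR_FTAP_general Ps this W hWmeas hW1 Kc hKc.convex hKc.2.1 hFatou

end Paper
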